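/- arXiv:2404.07311 — 2 statements merged into one kernel-verified Lean document; each statement's English description precedes it below -/
import Mathlib

section
/- The average differential entropy satisfies h(X|W) = (n/2)·ln(2πσ²) − (μ/q)^{n/2}·(2π)^{−qn/2}·(1/q)·Σ_{j=1}^q ∫_{(ℝⁿ)^q} exp(−(1/2)Σ_{a=1}^q ‖z_a‖² + (1/(2q))‖Σ_{a=1}^q z_a‖² − (μ/2)‖z_j‖²) · ln[(1/q)Σ_{k=1}^q exp(−(μ/2)‖z_k‖²)] dz_1⋯dz_q. -/
open MeasureTheory Real Finset

/-!
Substitute `zⱼ = (wⱼ - x) / s` for the means, for each fixed `x`. The mixture density becomes a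
constant times `g(z) = (1/q) ∑ₖ exp(-(μ/2) ‖zₖ‖²)`, which does not involve `x`; the constant splits
off the logarithm as `(n/2) ln(2πσ²)`. Hence `x` survives only in the joint density of the means
`wⱼ = s zⱼ + x`. Completing the square there leaves a Gaussian in `x` of variance `s² / q`, which
integrates out, times `exp(-½ ∑ₐ ‖zₐ - z̄‖²)`, where `z̄` is the barycentre of the `zₐ`. Fubini's
theorem applies because the joint density is nonnegative and its integral over `x` is explicit.
-/

theorem integrable_mul_comp_snd_of_nonneg {X Z : Type*} [MeasurableSpace X] [MeasurableSpace Z]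
    {ν : Measure X} {μ : Measure Z} [SFinite ν] [SFinite μ] {k : X × Z → ℝ} {Φ : Z → ℝ}
    (hk : Measurable k) (hΦ : Measurable Φ) (hk_nonneg : ∀ p, 0 ≤ k p)
    (hfiber : ∀ z, Integrable (fun x => k (x, z)) ν)
    (hmarginal : Integrable (fun z => (∫ x, k (x, z) ∂ν) * Φ z) μ) :
    Integrable (fun p : X × Z => k p * Φ p.2) (ν.prod μ) := by
  have hmeas : Measurable fun p : X × Z => k p * Φ p.2 := by fun_prop
  rw [integrable_prod_iff' hmeas.aestronglyMeasurable]
  refine ⟨ae_of_all _ fun z => (hfiber z).mul_const (Φ z), hmarginal.norm.congr ?_⟩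
  filter_upwards with z
  simp only [norm_mul, norm_of_nonneg (hk_nonneg _), integral_mul_const,
    norm_of_nonneg (integral_nonneg fun x => hk_nonneg (x, z))]

section AffineShear

variable {E V : Type*} [MeasurableSpace E] {ν : Measure E} [SFinite ν]
  [NormedAddCommGroup V] [NormedSpace ℝ V] [FiniteDimensional ℝ V] [MeasurableSpace V]
  [BorelSpace V] {μ : Measure V} [μ.IsAddHaarMeasure] {s : ℝ} {T : E → V}

theorem measurePreserving_prod_smul_add (hs : s ≠ 0) (hT : Measurable T) :
    MeasurePreserving (fun p : E × V => (p.1, s • p.2 + T p.1)) (ν.prod μ)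
      (ENNReal.ofReal |(s ^ Module.finrank ℝ V)⁻¹| • ν.prod μ) := by
  rw [← Measure.prod_smul_right]
  refine (MeasurePreserving.id ν).skew_product (g := fun x z => s • z + T x)
    ((measurable_snd.const_smul s).add (hT.comp measurable_fst)) (ae_of_all _ fun x => ?_)
  calc μ.map (fun z => s • z + T x)
      = (μ.map (s • ·)).map (· + T x) :=
        (Measure.map_map (measurable_add_const _) (measurable_const_smul s)).symm
    _ = ENNReal.ofReal |(s ^ Module.finrank ℝ V)⁻¹| • μ := by
        rw [Measure.map_addHaar_smul μ hs, Measure.map_smul, map_add_right_eq_self]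

theorem integrable_prod_comp_smul_add_iff (hs : s ≠ 0) (hT : Measurable T) {F : E × V → ℝ}
    (hF : Measurable F) :
    Integrable (fun p => F (p.1, s • p.2 + T p.1)) (ν.prod μ) ↔ Integrable F (ν.prod μ) := by
  refine ((measurePreserving_prod_smul_add hs hT).integrable_comp
    hF.aestronglyMeasurable).trans (integrable_smul_measure ?_ ENNReal.ofReal_ne_top)
  simpa using pow_pos (abs_pos.2 hs) _

theorem integral_prod_comp_smul_add (hs : s ≠ 0) (hT : Measurable T) {F : E × V → ℝ}
    (hF : Measurable F) :
    ∫ p, F (p.1, s • p.2 + T p.1) ∂ν.prod μ =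
      |(s ^ Module.finrank ℝ V)⁻¹| * ∫ p, F p ∂ν.prod μ := by
  have hpres := measurePreserving_prod_smul_add (ν := ν) (μ := μ) hs hT
  rw [← integral_map hpres.aemeasurable hF.aestronglyMeasurable, hpres.map_eq,
    integral_smul_measure, ENNReal.toReal_ofReal (abs_nonneg _), smul_eq_mul]

variable {P Φ : V → ℝ}

theorem integrable_mul_comp_inv_smul_sub (hs : s ≠ 0) (hPm : Measurable P) (hΦm : Measurable Φ)
    (hT : Measurable T)
    (hjoint : Integrable (fun p : E × V => P (s • p.2 + T p.1) * Φ p.2) (ν.prod μ)) :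
    Integrable (fun p : E × V => P p.2 * Φ (s⁻¹ • (p.2 - T p.1))) (ν.prod μ) := by
  rw [← integrable_prod_comp_smul_add_iff hs hT (by fun_prop)]
  simpa only [add_sub_cancel_right, inv_smul_smul₀ hs] using hjoint

theorem integrable_mul_integral_comp_inv_smul_sub (hs : s ≠ 0) (hPm : Measurable P)
    (hΦm : Measurable Φ) (hT : Measurable T)
    (hjoint : Integrable (fun p : E × V => P (s • p.2 + T p.1) * Φ p.2) (ν.prod μ)) :
    Integrable (fun w => P w * ∫ x, Φ (s⁻¹ • (w - T x)) ∂ν) μ := by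
  simpa only [integral_const_mul] using
    (integrable_mul_comp_inv_smul_sub hs hPm hΦm hT hjoint).integral_prod_right

theorem integral_mul_integral_comp_inv_smul_sub (hs : s ≠ 0) (hPm : Measurable P)
    (hΦm : Measurable Φ) (hT : Measurable T)
    (hjoint : Integrable (fun p : E × V => P (s • p.2 + T p.1) * Φ p.2) (ν.prod μ)) :
    ∫ w, P w * ∫ x, Φ (s⁻¹ • (w - T x)) ∂ν ∂μ =
      |s ^ Module.finrank ℝ V| * ∫ z, (∫ x, P (s • z + T x) ∂ν) * Φ z ∂μ := by
  have hsheared := integral_prod_comp_smul_add (ν := ν) (μ := μ) hs hT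
    (F := fun p => P p.2 * Φ (s⁻¹ • (p.2 - T p.1))) (by fun_prop)
  simp only [add_sub_cancel_right, inv_smul_smul₀ hs] at hsheared
  rw [integral_prod_symm _ hjoint,
    integral_prod_symm _ (integrable_mul_comp_inv_smul_sub hs hPm hΦm hT hjoint)] at hsheared
  simp only [integral_const_mul, integral_mul_const] at hsheared
  rw [hsheared, abs_inv, mul_inv_cancel_left₀ (abs_ne_zero.2 (pow_ne_zero _ hs))]

end AffineShear

section Entropy

/-- The differential entropy `-∫ f ln f` of a density `f`; it takes the junk value `0` when
`f ln f` is not integrable. -/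
noncomputable def differentialEntropy {α : Type*} [MeasureSpace α] (f : α → ℝ) : ℝ :=
  -∫ x, f x * log (f x)

theorem differentialEntropy_const_mul {α : Type*} [MeasureSpace α] {g : α → ℝ} {c : ℝ}
    (hc : 0 < c) (hg : ∀ x, 0 < g x) (hmass : ∫ x, c * g x = 1)
    (hint : Integrable fun x => c * g x * log (c * g x)) :
    differentialEntropy (fun x => c * g x) = -log c - c * ∫ x, g x * log (g x) := by
  have hsplit : ∀ x, c * (g x * log (g x)) = c * g x * log (c * g x) - log c * (c * g x) := by
    intro x
    rw [log_mul hc.ne' (hg x).ne']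
    ring
  rw [differentialEntropy, ← integral_const_mul, integral_congr_ae (ae_of_all _ hsplit),
    integral_sub hint ((integrable_of_integral_eq_one hmass).const_mul _), integral_const_mul,
    hmass]
  ring

end Entropy

section Gaussian

variable {ι κ : Type*} [Fintype ι] [Fintype κ]

/-- The density at `x` of the Gaussian law on `ℝ^κ` with mean `m` and covariance `v • 1`. -/
noncomputable def isotropicGaussianPDF (v : ℝ) (m x : κ → ℝ) : ℝ :=
  (2 * π * v) ^ (-(Fintype.card κ : ℝ) / 2) * exp (-(∑ i, (x i - m i) ^ 2) / (2 * v))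

theorem isotropicGaussianPDF_eq_prod (v : NNReal) (m x : κ → ℝ) :
    isotropicGaussianPDF v m x = ∏ i, ProbabilityTheory.gaussianPDFReal (m i) v (x i) := by
  have hnorm : (2 * π * (v : ℝ)) ^ (-(Fintype.card κ : ℝ) / 2) =
      (√(2 * π * v))⁻¹ ^ Fintype.card κ := by
    rw [sqrt_eq_rpow, ← rpow_neg (by positivity), ← rpow_mul_natCast (by positivity)]
    ring_nf
  simp only [isotropicGaussianPDF, ProbabilityTheory.gaussianPDFReal, prod_mul_distrib,
    prod_const, card_univ, ← exp_sum, ← sum_div, sum_neg_distrib, hnorm]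

theorem rpow_mul_isotropicGaussianPDF {v : ℝ} (hv : 0 < v) (m x : κ → ℝ) :
    (2 * π * v) ^ ((Fintype.card κ : ℝ) / 2) * isotropicGaussianPDF v m x =
      exp (-(∑ i, (x i - m i) ^ 2) / (2 * v)) := by
  rw [isotropicGaussianPDF, ← mul_assoc, ← rpow_add (by positivity), neg_div, add_neg_cancel,
    rpow_zero, one_mul]

theorem isotropicGaussianPDF_pos {v : ℝ} (hv : 0 < v) (m x : κ → ℝ) :
    0 < isotropicGaussianPDF v m x := by
  unfold isotropicGaussianPDF
  positivity

theorem integral_isotropicGaussianPDF {v : ℝ} (hv : 0 < v) (m : κ → ℝ) :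
    ∫ x, isotropicGaussianPDF v m x = 1 := by
  lift v to NNReal using hv.le
  have hv' : v ≠ 0 := by exact_mod_cast hv.ne'
  simp only [isotropicGaussianPDF_eq_prod]
  rw [integral_fintype_prod_volume_eq_prod
    (fun i => ProbabilityTheory.gaussianPDFReal (m i) v)]
  simp only [ProbabilityTheory.integral_gaussianPDFReal_eq_one _ hv', prod_const_one]

/-- The joint density of independent centered Gaussian means `w j`, each of covariance `v • 1`. -/
noncomputable def gaussianMeansPDF (v : ℝ) (w : ι → κ → ℝ) : ℝ :=
  ∏ j, isotropicGaussianPDF v 0 (w j)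

theorem gaussianMeansPDF_pos {v : ℝ} (hv : 0 < v) (w : ι → κ → ℝ) : 0 < gaussianMeansPDF v w :=
  prod_pos fun j _ => isotropicGaussianPDF_pos hv 0 (w j)

theorem continuous_gaussianMeansPDF (v : ℝ) :
    Continuous (gaussianMeansPDF v : (ι → κ → ℝ) → ℝ) := by
  unfold gaussianMeansPDF isotropicGaussianPDF
  fun_prop

theorem integral_gaussianMeansPDF {v : ℝ} (hv : 0 < v) :
    ∫ w : ι → κ → ℝ, gaussianMeansPDF v w = 1 := by
  unfold gaussianMeansPDF
  rw [integral_fintype_prod_volume_eq_prod fun _ : ι => isotropicGaussianPDF (κ := κ) v 0]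
  simp only [integral_isotropicGaussianPDF hv, prod_const_one]

/-- The density `f(x|w)` of the equal-weight mixture of the Gaussian laws with means `w j` and
covariance `v • 1`. -/
noncomputable def gaussianMixturePDF (v : ℝ) (w : ι → κ → ℝ) (x : κ → ℝ) : ℝ :=
  1 / (Fintype.card ι : ℝ) * ∑ j, isotropicGaussianPDF v (w j) x

theorem integral_gaussianMixturePDF [Nonempty ι] {v : ℝ} (hv : 0 < v) (w : ι → κ → ℝ) :
    ∫ x, gaussianMixturePDF v w x = 1 := by
  have hmass : ∀ j, ∫ x, isotropicGaussianPDF v (w j) x = 1 :=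
    fun j => integral_isotropicGaussianPDF hv (w j)
  simp only [gaussianMixturePDF]
  rw [integral_const_mul, integral_finsetSum _ fun j _ => integrable_of_integral_eq_one (hmass j)]
  simp [hmass]

/-- The mixture density without its Gaussian normalization, in the variables
`z k = (w k - x) / s`; here `μ = s² / σ²`. -/
noncomputable def rescaledMixture (μ : ℝ) (z : ι → κ → ℝ) : ℝ :=
  1 / (Fintype.card ι : ℝ) * ∑ k, exp (-(μ / 2) * ∑ i, z k i ^ 2)

theorem rescaledMixture_pos [Nonempty ι] (μ : ℝ) (z : ι → κ → ℝ) : 0 < rescaledMixture μ z :=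
  mul_pos (by positivity) (sum_pos (fun _ _ => exp_pos _) univ_nonempty)

theorem continuous_rescaledMixture (μ : ℝ) :
    Continuous (rescaledMixture μ : (ι → κ → ℝ) → ℝ) := by
  unfold rescaledMixture
  fun_prop

theorem gaussianMixturePDF_eq_mul_rescaledMixture {s : ℝ} (hs : s ≠ 0) (v : ℝ)
    (w : ι → κ → ℝ) (x : κ → ℝ) :
    gaussianMixturePDF v w x = (2 * π * v) ^ (-(Fintype.card κ : ℝ) / 2) *
      rescaledMixture (s ^ 2 / v) (s⁻¹ • (w - fun _ => x)) := by
  have hexponent : ∀ j, -(∑ i, (x i - w j i) ^ 2) / (2 * v) =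
      -(s ^ 2 / v / 2) * ∑ i, (s⁻¹ * (w j i - x i)) ^ 2 := by
    intro j
    simp only [mul_pow, ← mul_sum, sub_sq_comm (w j _)]
    field_simp
  simp only [gaussianMixturePDF, rescaledMixture, isotropicGaussianPDF, hexponent, ← mul_sum,
    Pi.smul_apply, Pi.sub_apply, smul_eq_mul]
  ring

theorem differentialEntropy_gaussianMixturePDF [Nonempty ι] {s v : ℝ} (hs : s ≠ 0) (hv : 0 < v)
    (w : ι → κ → ℝ)
    (hint : Integrable fun x => gaussianMixturePDF v w x * log (gaussianMixturePDF v w x)) :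
    differentialEntropy (gaussianMixturePDF v w) =
      (Fintype.card κ : ℝ) / 2 * log (2 * π * v) -
        (2 * π * v) ^ (-(Fintype.card κ : ℝ) / 2) *
          ∫ x, rescaledMixture (s ^ 2 / v) (s⁻¹ • (w - fun _ => x)) *
            log (rescaledMixture (s ^ 2 / v) (s⁻¹ • (w - fun _ => x))) := by
  have hmix := funext (gaussianMixturePDF_eq_mul_rescaledMixture hs v w)
  have hmass := integral_gaussianMixturePDF hv w
  rw [hmix] at hint hmass ⊢
  rw [differentialEntropy_const_mul (by positivity) (fun x => rescaledMixture_pos _ _) hmass hint,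
    log_rpow (by positivity)]
  ring

/-- The exponent `-½ ∑ₐ ‖zₐ - z̄‖²`, where `z̄` is the barycentre of the `zₐ`, in expanded form. -/
noncomputable def dispersionExponent (z : ι → κ → ℝ) : ℝ :=
  -(1 / 2) * ∑ a, ∑ i, z a i ^ 2 + 1 / (2 * (Fintype.card ι : ℝ)) * ∑ i, (∑ a, z a i) ^ 2

theorem sum_mul_add_sq_eq [Nonempty ι] (s x : ℝ) (z : ι → ℝ) :
    ∑ j, (s * z j + x) ^ 2 = s ^ 2 * (∑ j, z j ^ 2 - (∑ j, z j) ^ 2 / Fintype.card ι) +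
      Fintype.card ι * (x + s / Fintype.card ι * ∑ j, z j) ^ 2 := by
  have hexpand : ∑ j, (s * z j + x) ^ 2 =
      s ^ 2 * ∑ j, z j ^ 2 + 2 * s * x * ∑ j, z j + Fintype.card ι * x ^ 2 := by
    simp only [add_sq, mul_pow, sum_add_distrib, mul_sum, sum_const, card_univ, nsmul_eq_mul]
    congr 2
    exact sum_congr rfl fun j _ => by ring
  rw [hexpand]
  field_simp
  ring

theorem sum_neg_sum_mul_add_sq_div_eq [Nonempty ι] {s : ℝ} (hs : s ≠ 0) (z : ι → κ → ℝ)
    (x : κ → ℝ) :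
    ∑ j, -(∑ i, (s * z j i + x i) ^ 2) / (2 * s ^ 2) =
      dispersionExponent z + -(∑ i, (x i - -(s / Fintype.card ι * ∑ a, z a i)) ^ 2) /
        (2 * (s ^ 2 / Fintype.card ι)) := by
  simp only [dispersionExponent, sub_neg_eq_add, ← sum_div, sum_neg_distrib]
  rw [sum_comm, sum_comm (f := fun a i => z a i ^ 2)]
  simp only [sum_mul_add_sq_eq, sum_add_distrib, ← mul_sum, sum_sub_distrib, ← sum_div]
  field_simp
  ring

theorem gaussianMeansPDF_smul_add [Nonempty ι] {s : ℝ} (hs : s ≠ 0) (z : ι → κ → ℝ)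
    (x : κ → ℝ) :
    gaussianMeansPDF (s ^ 2) (s • z + fun _ => x) =
      ((2 * π * s ^ 2) ^ (-(Fintype.card κ : ℝ) / 2)) ^ Fintype.card ι *
        (2 * π * (s ^ 2 / Fintype.card ι)) ^ ((Fintype.card κ : ℝ) / 2) *
        exp (dispersionExponent z) *
        isotropicGaussianPDF (s ^ 2 / Fintype.card ι)
          (fun i => -(s / Fintype.card ι * ∑ a, z a i)) x := by
  have hvar : 0 < s ^ 2 / Fintype.card ι := by positivity
  rw [mul_right_comm _ _ (exp _), mul_assoc _ _ (isotropicGaussianPDF _ _ _),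
    rpow_mul_isotropicGaussianPDF hvar, mul_assoc, ← exp_add, ← sum_neg_sum_mul_add_sq_div_eq hs]
  simp only [gaussianMeansPDF, isotropicGaussianPDF, prod_mul_distrib, prod_const, card_univ,
    ← exp_sum, Pi.add_apply, Pi.smul_apply, smul_eq_mul, Pi.zero_apply, sub_zero]

theorem integrable_gaussianMeansPDF_smul_add [Nonempty ι] {s : ℝ} (hs : s ≠ 0)
    (z : ι → κ → ℝ) :
    Integrable fun x => gaussianMeansPDF (s ^ 2) (s • z + fun _ => x) := by
  simp only [gaussianMeansPDF_smul_add hs]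
  exact (integrable_of_integral_eq_one
    (integral_isotropicGaussianPDF (by positivity) _)).const_mul _

theorem integral_gaussianMeansPDF_smul_add [Nonempty ι] {s : ℝ} (hs : s ≠ 0) (z : ι → κ → ℝ) :
    ∫ x, gaussianMeansPDF (s ^ 2) (s • z + fun _ => x) =
      ((2 * π * s ^ 2) ^ (-(Fintype.card κ : ℝ) / 2)) ^ Fintype.card ι *
        (2 * π * (s ^ 2 / Fintype.card ι)) ^ ((Fintype.card κ : ℝ) / 2) *
        exp (dispersionExponent z) := by
  simp only [gaussianMeansPDF_smul_add hs]
  rw [integral_const_mul, integral_isotropicGaussianPDF (by positivity), mul_one]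

theorem abs_pow_mul_rpow_pow_eq {s : ℝ} (hs : s ≠ 0) (q n : ℕ) :
    |s ^ (q * n)| * ((2 * π * s ^ 2) ^ (-(n : ℝ) / 2)) ^ q =
      (2 * π) ^ (-((q : ℝ) * n) / 2) := by
  have habs : |s ^ (q * n)| = (s ^ 2) ^ ((q : ℝ) * n / 2) := by
    rw [abs_pow, ← sqrt_sq_eq_abs, sqrt_eq_rpow, ← rpow_mul_natCast (sq_nonneg s)]
    push_cast
    ring_nf
  have hpow : ((2 * π * s ^ 2) ^ (-(n : ℝ) / 2)) ^ q =
      (2 * π * s ^ 2) ^ (-((q : ℝ) * n) / 2) := by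
    rw [← rpow_mul_natCast (by positivity)]
    ring_nf
  rw [habs, hpow, mul_rpow (by positivity) (by positivity), mul_left_comm,
    ← rpow_add (by positivity), neg_div, add_neg_cancel, rpow_zero, mul_one]

theorem rpow_neg_mul_rpow_div_eq {s v : ℝ} (hv : 0 < v) (q a : ℝ) (hq : 0 < q) :
    (2 * π * v) ^ (-a) * (2 * π * (s ^ 2 / q)) ^ a = (s ^ 2 / v / q) ^ a := by
  rw [rpow_neg (by positivity), ← inv_rpow (by positivity),
    ← mul_rpow (by positivity) (by positivity)]
  congr 1
  field_simp

theorem integrable_gaussianMeansPDF_mul_comp_smul_add [Nonempty ι] {s : ℝ} (hs : s ≠ 0)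
    {Φ : (ι → κ → ℝ) → ℝ} (hΦ : Measurable Φ)
    (hint : Integrable fun z => exp (dispersionExponent z) * Φ z) :
    Integrable (fun p : (κ → ℝ) × (ι → κ → ℝ) =>
      gaussianMeansPDF (s ^ 2) (s • p.2 + fun _ => p.1) * Φ p.2) := by
  have hmeas : Measurable fun p : (κ → ℝ) × (ι → κ → ℝ) =>
      gaussianMeansPDF (s ^ 2) (s • p.2 + fun _ => p.1) :=
    (continuous_gaussianMeansPDF (s ^ 2)).measurable.comp (by fun_prop)
  refine integrable_mul_comp_snd_of_nonneg hmeas hΦ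
    (fun p => (gaussianMeansPDF_pos (by positivity) _).le)
    (integrable_gaussianMeansPDF_smul_add hs) ?_
  simp only [integral_gaussianMeansPDF_smul_add hs, mul_assoc]
  exact (hint.const_mul _).const_mul _

theorem integral_gaussianMeansPDF_mul_integral_comp [Nonempty ι] {s : ℝ} (hs : s ≠ 0)
    {Φ : (ι → κ → ℝ) → ℝ} (hΦ : Measurable Φ)
    (hint : Integrable fun z => exp (dispersionExponent z) * Φ z) :
    ∫ w : ι → κ → ℝ, gaussianMeansPDF (s ^ 2) w * ∫ x : κ → ℝ, Φ (s⁻¹ • (w - fun _ => x)) =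
      (2 * π) ^ (-((Fintype.card ι : ℝ) * Fintype.card κ) / 2) *
        (2 * π * (s ^ 2 / Fintype.card ι)) ^ ((Fintype.card κ : ℝ) / 2) *
        ∫ z, exp (dispersionExponent z) * Φ z := by
  have hdim : Module.finrank ℝ (ι → κ → ℝ) = Fintype.card ι * Fintype.card κ := by
    simp [Module.finrank_pi_fintype]
  rw [integral_mul_integral_comp_inv_smul_sub (T := fun (x : κ → ℝ) _ => x) hs
    (continuous_gaussianMeansPDF _).measurable hΦ (by fun_prop)
    (integrable_gaussianMeansPDF_mul_comp_smul_add hs hΦ hint), hdim]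
  simp only [integral_gaussianMeansPDF_smul_add hs, mul_assoc _ (exp _)]
  rw [integral_const_mul, ← abs_pow_mul_rpow_pow_eq hs]
  ring

theorem integral_gaussianMeansPDF_mul_differentialEntropy [Nonempty ι] {s v : ℝ} (hs : s ≠ 0)
    (hv : 0 < v)
    (hentropy : ∀ w : ι → κ → ℝ,
      Integrable fun x => gaussianMixturePDF v w x * log (gaussianMixturePDF v w x))
    (hint : Integrable fun z : ι → κ → ℝ => exp (dispersionExponent z) *
      (rescaledMixture (s ^ 2 / v) z * log (rescaledMixture (s ^ 2 / v) z))) :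
    ∫ w : ι → κ → ℝ, gaussianMeansPDF (s ^ 2) w * differentialEntropy (gaussianMixturePDF v w) =
      (Fintype.card κ : ℝ) / 2 * log (2 * π * v) -
        (s ^ 2 / v / Fintype.card ι) ^ ((Fintype.card κ : ℝ) / 2) *
          (2 * π) ^ (-((Fintype.card ι : ℝ) * Fintype.card κ) / 2) *
          ∫ z : ι → κ → ℝ, exp (dispersionExponent z) *
            (rescaledMixture (s ^ 2 / v) z * log (rescaledMixture (s ^ 2 / v) z)) := by
  have hmeas : Measurable fun z : ι → κ → ℝ =>
      rescaledMixture (s ^ 2 / v) z * log (rescaledMixture (s ^ 2 / v) z) := by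
    have := (continuous_rescaledMixture (ι := ι) (κ := κ) (s ^ 2 / v)).measurable
    fun_prop
  have hmass := integral_gaussianMeansPDF (ι := ι) (κ := κ) (v := s ^ 2) (by positivity)
  have hinner := integrable_mul_integral_comp_inv_smul_sub (T := fun (x : κ → ℝ) _ => x) hs
    (continuous_gaussianMeansPDF (s ^ 2)).measurable hmeas (by fun_prop)
    (integrable_gaussianMeansPDF_mul_comp_smul_add hs hmeas hint)
  simp only [differentialEntropy_gaussianMixturePDF hs hv _ (hentropy _), mul_sub,
    fun w : ι → κ → ℝ => mul_left_comm (gaussianMeansPDF (s ^ 2) w)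
      ((2 * π * v) ^ (-(Fintype.card κ : ℝ) / 2))]
  rw [integral_sub ((integrable_of_integral_eq_one hmass).mul_const _) (hinner.const_mul _),
    integral_mul_const, hmass, one_mul, integral_const_mul,
    integral_gaussianMeansPDF_mul_integral_comp hs hmeas hint,
    ← rpow_neg_mul_rpow_div_eq hv _ _ (by positivity), neg_div]
  ring

theorem exp_mul_rescaledMixture_mul (μ A L : ℝ) (z : ι → κ → ℝ) :
    exp A * (rescaledMixture μ z * L) =
      1 / (Fintype.card ι : ℝ) * ∑ j, exp (A - μ / 2 * ∑ i, z j i ^ 2) * L := by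
  simp only [rescaledMixture, sub_eq_add_neg, exp_add, ← sum_mul, ← mul_sum, neg_mul]
  ring

theorem integrable_exp_mul_rescaledMixture_mul {μ : ℝ} {A L : (ι → κ → ℝ) → ℝ}
    (hint : ∀ j, Integrable fun z => exp (A z - μ / 2 * ∑ i, z j i ^ 2) * L z) :
    Integrable fun z => exp (A z) * (rescaledMixture μ z * L z) := by
  simp only [exp_mul_rescaledMixture_mul]
  exact (integrable_finsetSum _ fun j _ => hint j).const_mul _

theorem integral_exp_mul_rescaledMixture_mul {μ : ℝ} {A L : (ι → κ → ℝ) → ℝ}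
    (hint : ∀ j, Integrable fun z => exp (A z - μ / 2 * ∑ i, z j i ^ 2) * L z) :
    ∫ z, exp (A z) * (rescaledMixture μ z * L z) = 1 / (Fintype.card ι : ℝ) *
      ∑ j, ∫ z, exp (A z - μ / 2 * ∑ i, z j i ^ 2) * L z := by
  simp only [exp_mul_rescaledMixture_mul]
  rw [integral_const_mul, integral_finsetSum _ fun j _ => hint j]

end Gaussian

/-- Lemma 1 of the paper.
The average differential entropy of a `q`-component Gaussian mixture in `ℝⁿ`,
with component means i.i.d. centered Gaussian with covariance `s² 1` and shared
component covariance `σ² 1`, equals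
`(n/2)·ln(2πσ²) − (μ/q)^{n/2} (2π)^{−qn/2} (1/q) Σ_j ∫ exp(…) ln(…) dz`. -/
theorem average_entropy_first_change_of_variables
    (q n : ℕ) (hq : 2 ≤ q) (hn : 1 ≤ n)
    (σ s : ℝ) (hσ : 0 < σ) (hs : 0 < s)
    (μ : ℝ) (hμ : μ = s ^ 2 / σ ^ 2)
    -- the Gaussian mixture density `f(x|w)`
    (f : (Fin q → Fin n → ℝ) → (Fin n → ℝ) → ℝ)
    (hf : ∀ w x, f w x =
      (1 / (q : ℝ)) * ∑ j : Fin q, (2 * π * σ ^ 2) ^ (-(n : ℝ) / 2) *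
        Real.exp (-(∑ i, (x i - w j i) ^ 2) / (2 * σ ^ 2)))
    -- the conditional differential entropy `h(X | W = w)`
    (hEnt : (Fin q → Fin n → ℝ) → ℝ)
    (hhEnt : ∀ w, hEnt w = -∫ x : Fin n → ℝ, f w x * Real.log (f w x))
    (hInt1 : ∀ w, Integrable (fun x : Fin n → ℝ => f w x * Real.log (f w x)))
    -- the average differential entropy `h(X|W)`
    (H : ℝ)
    (hH : H = ∫ w : Fin q → Fin n → ℝ,
      (∏ j : Fin q, (2 * π * s ^ 2) ^ (-(n : ℝ) / 2) *
        Real.exp (-(∑ i, w j i ^ 2) / (2 * s ^ 2))) * hEnt w)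
    (hInt2 : Integrable (fun w : Fin q → Fin n → ℝ =>
      (∏ j : Fin q, (2 * π * s ^ 2) ^ (-(n : ℝ) / 2) *
        Real.exp (-(∑ i, w j i ^ 2) / (2 * s ^ 2))) * hEnt w))
    (hInt3 : ∀ j : Fin q, Integrable (fun z : Fin q → Fin n → ℝ =>
      Real.exp (-(1 / 2) * ∑ a : Fin q, ∑ i, z a i ^ 2
          + (1 / (2 * (q : ℝ))) * ∑ i, (∑ a : Fin q, z a i) ^ 2
          - (μ / 2) * ∑ i, z j i ^ 2) *
        Real.log ((1 / (q : ℝ)) * ∑ k : Fin q,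
          Real.exp (-(μ / 2) * ∑ i, z k i ^ 2)))) :
    H = ((n : ℝ) / 2) * Real.log (2 * π * σ ^ 2)
      - (μ / (q : ℝ)) ^ ((n : ℝ) / 2) * (2 * π) ^ (-((q : ℝ) * (n : ℝ)) / 2) * (1 / (q : ℝ)) *
        ∑ j : Fin q, ∫ z : Fin q → Fin n → ℝ,
          Real.exp (-(1 / 2) * ∑ a : Fin q, ∑ i, z a i ^ 2
              + (1 / (2 * (q : ℝ))) * ∑ i, (∑ a : Fin q, z a i) ^ 2
              - (μ / 2) * ∑ i, z j i ^ 2) *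
            Real.log ((1 / (q : ℝ)) * ∑ k : Fin q,
              Real.exp (-(μ / 2) * ∑ i, z k i ^ 2)) := by
  have : Nonempty (Fin q) := ⟨⟨0, by omega⟩⟩
  subst hμ hH
  obtain rfl : f = gaussianMixturePDF (σ ^ 2) := by
    funext w x
    simp only [hf, gaussianMixturePDF, isotropicGaussianPDF, Fintype.card_fin]
  obtain rfl : hEnt = fun w => differentialEntropy (gaussianMixturePDF (σ ^ 2) w) := funext hhEnt
  have hmeans : ∀ w : Fin q → Fin n → ℝ, ∏ j : Fin q, (2 * π * s ^ 2) ^ (-(n : ℝ) / 2) *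
      Real.exp (-(∑ i, w j i ^ 2) / (2 * s ^ 2)) = gaussianMeansPDF (s ^ 2) w := fun w => by
    simp only [gaussianMeansPDF, isotropicGaussianPDF, Fintype.card_fin, Pi.zero_apply, sub_zero]
  have hterms : ∀ j : Fin q, Integrable fun z : Fin q → Fin n → ℝ =>
      exp (dispersionExponent z - s ^ 2 / σ ^ 2 / 2 * ∑ i, z j i ^ 2) *
        log (rescaledMixture (s ^ 2 / σ ^ 2) z) := by
    simpa only [dispersionExponent, rescaledMixture, Fintype.card_fin] using hInt3
  simp only [hmeans]
  rw [integral_gaussianMeansPDF_mul_differentialEntropy hs.ne' (by positivity) hInt1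
    (integrable_exp_mul_rescaledMixture_mul hterms), integral_exp_mul_rescaledMixture_mul hterms]
  simp only [dispersionExponent, rescaledMixture, Fintype.card_fin, mul_assoc]
end

section
/- For every measurable function F : (ℝⁿ)^q → ℝ that is invariant under all permutations of its q vector arguments and for which the integrals below converge absolutely, one has ∫_{(ℝⁿ)^q} exp(−(1/2)Σ_{j=1}^q ‖z_j‖² + (1/(2q))Σ_{i,j=1}^q z_i·z_j) · (1/q)Σ_{k=1}^q exp(−(μ/2)‖z_k‖²) · F(z_1,…,z_q) dz_1⋯dz_q = ∫_{(ℝⁿ)^q} exp(−(1/2)Σ_{i,j=1}^q M_{ij} z_i·z_j) · F(z_1,…,z_q) dz_1⋯dz_q. -/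
open MeasureTheory Real Finset

/-!
Splitting off the `μ`-entry of `M`, the right-hand integrand is `f (z l) • G z`, where
`f x = exp (-μ ‖x‖² / 2)`, `l` is the last index and `G` is invariant under permuting the `z j`.
Relabelling the variables preserves the product measure and carries `f (z l) • G z` to
`f (z k) • G z`, so the integral does not depend on the index and equals the average over all `k`,
which is the left-hand side.
-/

section PermInvariantIntegrand

variable {ι α E : Type*} [Fintype ι] [MeasurableSpace α] {ν : Measure α} [SigmaFinite ν]

theorem measurePreserving_comp_perm (e : Equiv.Perm ι) :
    MeasurePreserving (fun z : ι → α => z ∘ e) (Measure.pi fun _ => ν) (Measure.pi fun _ => ν) :=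
  measurePreserving_arrowCongr' (fun _ => ν) (fun _ => ν) e.symm (.refl α) fun _ => .id ν

variable [NormedAddCommGroup E] [NormedSpace ℝ E]

theorem integral_comp_perm (g : (ι → α) → E) (e : Equiv.Perm ι) :
    ∫ z, g (z ∘ e) ∂Measure.pi (fun _ => ν) = ∫ z, g z ∂Measure.pi fun _ => ν :=
  (measurePreserving_comp_perm e).integral_comp
    (MeasurableEquiv.arrowCongr' e.symm (.refl α)).measurableEmbedding g

variable {f : α → ℝ} {G : (ι → α) → E}

theorem integrable_eval_smul_of_perm_invariant
    (hG : ∀ (e : Equiv.Perm ι) (z : ι → α), G (z ∘ e) = G z) {l : ι}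
    (hl : Integrable (fun z => f (z l) • G z) (Measure.pi fun _ => ν)) (k : ι) :
    Integrable (fun z => f (z k) • G z) (Measure.pi fun _ => ν) := by
  classical
  have relabelled : Integrable (fun z => f ((z ∘ Equiv.swap l k) l) • G (z ∘ Equiv.swap l k))
      (Measure.pi fun _ => ν) :=
    (measurePreserving_comp_perm (Equiv.swap l k)).integrable_comp_of_integrable hl
  simpa only [hG, Function.comp_apply, Equiv.swap_apply_left] using relabelled

theorem integral_eval_smul_eq_of_perm_invariant
    (hG : ∀ (e : Equiv.Perm ι) (z : ι → α), G (z ∘ e) = G z) (k l : ι) :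
    ∫ z, f (z k) • G z ∂Measure.pi (fun _ => ν) = ∫ z, f (z l) • G z ∂Measure.pi fun _ => ν := by
  classical
  simpa only [hG, Function.comp_apply, Equiv.swap_apply_left] using
    integral_comp_perm (fun z => f (z l) • G z) (Equiv.swap l k)

theorem integral_average_smul_of_perm_invariant
    (hG : ∀ (e : Equiv.Perm ι) (z : ι → α), G (z ∘ e) = G z) {l : ι}
    (hl : Integrable (fun z => f (z l) • G z) (Measure.pi fun _ => ν)) :
    ∫ z, (1 / (Fintype.card ι : ℝ) * ∑ k, f (z k)) • G z ∂Measure.pi (fun _ => ν)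
      = ∫ z, f (z l) • G z ∂Measure.pi fun _ => ν := by
  have : Nonempty ι := ⟨l⟩
  have card_ne_zero : (Fintype.card ι : ℝ) ≠ 0 := Nat.cast_ne_zero.2 Fintype.card_ne_zero
  calc ∫ z, (1 / (Fintype.card ι : ℝ) * ∑ k, f (z k)) • G z ∂Measure.pi (fun _ => ν)
      = (1 / (Fintype.card ι : ℝ)) • ∑ k, ∫ z, f (z k) • G z ∂Measure.pi fun _ => ν := by
        simp only [mul_smul, sum_smul]
        rw [integral_smul, integral_finsetSum _ fun k _ =>
          integrable_eval_smul_of_perm_invariant hG hl k]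
    _ = (1 / (Fintype.card ι : ℝ)) • ∑ _k : ι, ∫ z, f (z l) • G z ∂Measure.pi fun _ => ν := by
        simp only [integral_eval_smul_eq_of_perm_invariant hG _ l]
    _ = ∫ z, f (z l) • G z ∂Measure.pi fun _ => ν := by
        rw [sum_const, card_univ, ← Nat.cast_smul_eq_nsmul ℝ, smul_smul,
          one_div_mul_cancel card_ne_zero, one_smul]

end PermInvariantIntegrand

section QuadraticForm

variable {ι : Type*} [Fintype ι]

/-- The matrix `M^(q)` of the Gaussian weight: the centering matrix `1 - J / q`, with `J` the
all-ones matrix, plus `μ` in a single diagonal entry. The index type is an arbitrary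
finite type with `q` elements, and the perturbed entry sits at an arbitrary index `l` instead of the
last one. -/
noncomputable def perturbedCenteringMatrix [DecidableEq ι] (μ : ℝ) (l : ι) : Matrix ι ι ℝ :=
  .of fun i j => (if i = j then 1 else 0) - 1 / (Fintype.card ι : ℝ)
    + μ * (if i = l then 1 else 0) * (if j = l then 1 else 0)

theorem sum_perturbedCenteringMatrix_mul [DecidableEq ι] (μ : ℝ) (l : ι) (K : ι → ι → ℝ) :
    ∑ a, ∑ b, perturbedCenteringMatrix μ l a b * K a b
      = ∑ a, K a a - 1 / (Fintype.card ι : ℝ) * ∑ a, ∑ b, K a b + μ * K l l := by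
  simp [perturbedCenteringMatrix, add_mul, sub_mul, sum_add_distrib, sum_sub_distrib, mul_sum]

theorem sum_sum_comp_perm {β : Type*} [AddCommMonoid β] (K : ι → ι → β) (e : Equiv.Perm ι) :
    ∑ a, ∑ b, K (e a) (e b) = ∑ a, ∑ b, K a b :=
  Fintype.sum_equiv e _ _ fun a => Equiv.sum_comp e (K (e a))

end QuadraticForm

theorem permutation_symmetry_integral_general {ι α E : Type*} [Fintype ι] [DecidableEq ι]
    [MeasurableSpace α] {ν : Measure α} [SigmaFinite ν] [NormedAddCommGroup E] [NormedSpace ℝ E]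
    (μ : ℝ) (l : ι) (B : α → α → ℝ) {F : (ι → α) → E}
    (hF : ∀ (e : Equiv.Perm ι) (z : ι → α), F (z ∘ e) = F z)
    (hint : Integrable (fun z => exp (-(1 / 2) *
      ∑ a, ∑ b, perturbedCenteringMatrix μ l a b * B (z a) (z b)) • F z) (Measure.pi fun _ => ν)) :
    ∫ z, (exp (-(1 / 2) * ∑ j, B (z j) (z j)
          + 1 / (2 * (Fintype.card ι : ℝ)) * ∑ a, ∑ b, B (z a) (z b)) *
        (1 / (Fintype.card ι : ℝ) * ∑ k, exp (-(μ / 2) * B (z k) (z k)))) • F z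
          ∂Measure.pi (fun _ => ν)
      = ∫ z, exp (-(1 / 2) * ∑ a, ∑ b, perturbedCenteringMatrix μ l a b * B (z a) (z b)) • F z
          ∂Measure.pi fun _ => ν := by
  let G : (ι → α) → E := fun z => exp (-(1 / 2) * ∑ j, B (z j) (z j)
    + 1 / (2 * (Fintype.card ι : ℝ)) * ∑ a, ∑ b, B (z a) (z b)) • F z
  have G_comp_perm (e : Equiv.Perm ι) (z : ι → α) : G (z ∘ e) = G z := by
    simp only [G, hF, Function.comp_apply, Equiv.sum_comp e fun j => B (z j) (z j),
      sum_sum_comp_perm (fun a b => B (z a) (z b)) e]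
  have weight_smul_eq (z : ι → α) :
      exp (-(1 / 2) * ∑ a, ∑ b, perturbedCenteringMatrix μ l a b * B (z a) (z b)) • F z
        = exp (-(μ / 2) * B (z l) (z l)) • G z := by
    rw [sum_perturbedCenteringMatrix_mul μ l fun a b => B (z a) (z b), smul_smul, ← exp_add]
    congr 2
    ring
  simp only [weight_smul_eq] at hint ⊢
  rw [← integral_average_smul_of_perm_invariant (f := fun x => exp (-(μ / 2) * B x x))
    G_comp_perm hint]
  simp only [G, smul_smul, mul_comm]

/-- Lemma 2 of the paper.
For any permutation-invariant measurable `F : (ℝⁿ)^q → ℝ` (with absolutely convergent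
integrals),
`∫ exp(−½Σ‖z_j‖² + (1/2q)Σ_{ij} z_i·z_j) (1/q)Σ_k exp(−μ‖z_k‖²/2) F dz
  = ∫ exp(−½ ẑᵀ M ẑ) F dz`,
where `M_{ij} = δ_{ij} − 1/q + μ δ_{iq} δ_{jq}`. -/
theorem permutation_symmetry_integral
    (q n : ℕ) (hq : 2 ≤ q) (hn : 1 ≤ n) (μ : ℝ) (hμ : 0 < μ)
    (M : Matrix (Fin q) (Fin q) ℝ)
    (hM : ∀ i j : Fin q, M i j = (if i = j then (1 : ℝ) else 0) - 1 / (q : ℝ)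
      + μ * (if (i : ℕ) + 1 = q then 1 else 0) * (if (j : ℕ) + 1 = q then 1 else 0))
    (F : (Fin q → Fin n → ℝ) → ℝ)
    (hFmeas : Measurable F)
    (hFsymm : ∀ (e : Equiv.Perm (Fin q)) (z : Fin q → Fin n → ℝ), F (z ∘ e) = F z)
    (hInt1 : Integrable (fun z : Fin q → Fin n → ℝ =>
      Real.exp (-(1 / 2) * ∑ j : Fin q, ∑ i, z j i ^ 2
          + (1 / (2 * (q : ℝ))) * ∑ a : Fin q, ∑ b : Fin q, ∑ i, z a i * z b i) *
        ((1 / (q : ℝ)) * ∑ k : Fin q, Real.exp (-(μ / 2) * ∑ i, z k i ^ 2)) * F z))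
    (hInt2 : Integrable (fun z : Fin q → Fin n → ℝ =>
      Real.exp (-(1 / 2) * ∑ a : Fin q, ∑ b : Fin q, M a b * ∑ i, z a i * z b i) * F z)) :
    (∫ z : Fin q → Fin n → ℝ,
      Real.exp (-(1 / 2) * ∑ j : Fin q, ∑ i, z j i ^ 2
          + (1 / (2 * (q : ℝ))) * ∑ a : Fin q, ∑ b : Fin q, ∑ i, z a i * z b i) *
        ((1 / (q : ℝ)) * ∑ k : Fin q, Real.exp (-(μ / 2) * ∑ i, z k i ^ 2)) * F z)
    = ∫ z : Fin q → Fin n → ℝ,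
        Real.exp (-(1 / 2) * ∑ a : Fin q, ∑ b : Fin q, M a b * ∑ i, z a i * z b i) * F z := by
  obtain ⟨m, rfl⟩ := Nat.exists_eq_add_of_le' (one_le_two.trans hq)
  obtain rfl : M = perturbedCenteringMatrix μ (Fin.last m) := by
    ext i j
    simp [hM, perturbedCenteringMatrix, Fin.ext_iff]
  simpa only [pow_two, volume_pi, Fintype.card_fin, smul_eq_mul] using
    permutation_symmetry_integral_general (ν := volume) μ (Fin.last m)
      (fun x y : Fin n → ℝ => ∑ i, x i * y i) hFsymm hInt2
end
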